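/- $\pi \int_{0}^{\infty} \frac{\Gamma(1 - \omega x)\, \Gamma(1 - x/\omega)}{\Gamma(1 + x)}\, dx = -2\pi \int_{0}^{\infty} \frac{dt}{\left(i t \sqrt{3} + \ln(2\sinh t)\right)^{2}}$, where $\omega = e^{2\pi i/3}$. (The left-hand side equals $\int_{0}^{\infty} \frac{\sin \pi x}{x \prod_{k=1}^{\infty}\left(1 - \frac{x^{3}}{k^{3}}\right)}\, dx$ by Euler's reflection formula.) -/

import Mathlib

/-!
Write `ω = e^{2πi/3}` and `A(t) = it√3 + ln(2 sinh t)`. Both sides are iterated integrals of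
`y e^{-ω² A(t) y}` over `y, t > 0`, taken in the two possible orders.

* Since `-ωy + (1 - ω²y) = 1 + y`, the integrand on the left is
  `-ωy Γ(-ωy) Γ(1 - ω²y) / Γ(1 + y) = -ωy B(-ωy, 1 - ω²y)`, and the substitution `v = e^{-2t}` in
  Euler's beta integral turns it into `-2ω ∫ y e^{-ω² A(t) y} dt` (`gamma_eq`).
* Integrating over `y` first gives `1 / (ω² A(t))² = ω⁻¹ / A(t)²` (`laplace`).

Fubini applies (`prod_int`) because `Re (ω² A(t)) = t - ½ ln(1 - e^{-2t})` is at least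
`max (t, 1/2)`, so that the integral of the absolute value is at most `∫ 8 / (1 + t²) dt`.
-/

open MeasureTheory Set

/-- The primitive cube root of unity `ω = -1/2 + i√3/2`. -/
noncomputable def om : ℂ := ⟨-1/2, √3/2⟩

lemma om_eq : Complex.exp (2 * Real.pi * Complex.I / 3) = om := by
  have h : (2 * Real.pi * Complex.I / 3 : ℂ)
      = ((Real.pi - Real.pi / 3 : ℝ) : ℂ) * Complex.I := by push_cast; ring
  rw [h]
  apply Complex.ext
  · rw [Complex.exp_ofReal_mul_I_re, Real.cos_pi_sub, Real.cos_pi_div_three]; simp [om]; norm_num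
  · rw [Complex.exp_ofReal_mul_I_im, Real.sin_pi_sub, Real.sin_pi_div_three]; simp [om]

lemma om_sq : om ^ 2 = -1 - om := by
  have h3 : √3 * √3 = 3 := Real.mul_self_sqrt (by norm_num)
  apply Complex.ext
  · simp [om, pow_two]; linarith
  · simp [om, pow_two]; ring

lemma om_cube : om ^ 3 = 1 := by
  linear_combination (om - 1) * om_sq

lemma om_ne : om ≠ 0 := by
  intro h; have := om_cube; rw [h] at this; norm_num at this

lemma I_sqrt : Complex.I * √3 = 2 * om + 1 := by
  apply Complex.ext <;> simp [om]
  all_goals ring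

/-- The function `A(t) = it√3 + ln(2 sinh t)` whose inverse square is integrated on the right. -/
noncomputable def A (t : ℝ) : ℂ := Complex.I * t * Real.sqrt 3 + Real.log (2 * Real.sinh t)

/-- The real part of `ω² A(t)` for `t > 0`, see `omA_re`. -/
noncomputable def R (t : ℝ) : ℝ := t - Real.log (1 - Real.exp (-2 * t)) / 2

lemma e_lt {t : ℝ} (ht : 0 < t) : 0 < 1 - Real.exp (-2 * t) := by
  have : Real.exp (-2 * t) < 1 := by rw [← Real.exp_zero]; exact Real.exp_lt_exp.mpr (by linarith)
  linarith

lemma log_sinh {t : ℝ} (ht : 0 < t) :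
    Real.log (2 * Real.sinh t) = t + Real.log (1 - Real.exp (-2 * t)) := by
  have h : 2 * Real.sinh t = Real.exp t * (1 - Real.exp (-2 * t)) := by
    rw [Real.sinh_eq, mul_sub, ← Real.exp_add]; ring_nf
  rw [h, Real.log_mul (Real.exp_ne_zero _) (e_lt ht).ne', Real.log_exp]

lemma omA {t : ℝ} (ht : 0 < t) :
    om ^ 2 * A t = -2 * om * t + om ^ 2 * Real.log (1 - Real.exp (-2 * t)) := by
  rw [A, log_sinh ht]
  push_cast
  linear_combination om ^ 2 * t * I_sqrt + 2 * t * om_cube + 2 * t * om_sq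

lemma omA_re {t : ℝ} (ht : 0 < t) : (om ^ 2 * A t).re = R t := by
  rw [omA ht, om_sq, Complex.add_re, Complex.re_mul_ofReal, Complex.re_mul_ofReal]
  simp [om, R]; ring

lemma R_bound {t : ℝ} (ht : 0 < t) : (1 + t ^ 2) / 8 ≤ (R t) ^ 2 ∧ 0 < R t := by
  have h1 := Real.log_le_sub_one_of_pos (e_lt ht)
  have h2 := Real.add_one_le_exp (-2 * t)
  have h3 := Real.exp_pos (-2 * t)
  -- `-ln(1 - e^{-2t}) ≥ e^{-2t} ≥ 1 - 2t`, so `R t ≥ t + (1 - 2t)/2 = 1/2`.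
  have a1 : t ≤ R t := by unfold R; linarith
  have a2 : 1 / 2 ≤ R t := by unfold R; linarith
  constructor
  · nlinarith
  · linarith

lemma laplace_int {b : ℂ} (hb : 0 < b.re) :
    IntegrableOn (fun y : ℝ => (y : ℂ) * Complex.exp (-b * y)) (Ioi 0) := by
  have h := integrableOn_rpow_mul_exp_neg_mul_rpow (p := 1) (s := 1) (b := b.re)
    (by norm_num) (by norm_num) hb
  refine Integrable.mono' h (by fun_prop) ?_
  refine (ae_restrict_mem measurableSet_Ioi).mono fun y hy => ?_
  have hy : 0 < y := hy
  simp [Complex.norm_exp, abs_of_pos hy]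

/-- For complex `b` the antiderivative `-(y/b + 1/b²) e^{-by}` is used, Mathlib's Gamma-integral
formula being restricted to real rates. -/
lemma laplace {b : ℂ} (hb : 0 < b.re) :
    ∫ y in Ioi (0 : ℝ), (y : ℂ) * Complex.exp (-b * y) = 1 / b ^ 2 := by
  have hb0 : b ≠ 0 := by rintro rfl; simp at hb
  have hexp : ∀ s : ℝ, Filter.Tendsto (fun y : ℝ => ((y ^ s : ℝ) : ℂ) * Complex.exp (-b * y))
      Filter.atTop (nhds 0) := fun s => by
    rw [tendsto_zero_iff_norm_tendsto_zero]
    refine (tendsto_rpow_mul_exp_neg_mul_atTop_nhds_zero s b.re hb).congr' ?_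
    filter_upwards [Filter.eventually_gt_atTop 0] with y hy
    simp [Complex.norm_exp, abs_of_pos (Real.rpow_pos_of_pos hy s)]
  have hlim : Filter.Tendsto (fun y : ℝ => -(y / b + 1 / b ^ 2) * Complex.exp (-b * y))
      Filter.atTop (nhds 0) := by
    have h := ((hexp 1).const_mul (-1 / b)).add ((hexp 0).const_mul (-1 / b ^ 2))
    simp only [mul_zero, add_zero, Real.rpow_one, Real.rpow_zero] at h
    refine h.congr fun y => ?_
    push_cast
    ring
  have hder : ∀ y ∈ Ici (0 : ℝ), HasDerivAt
      (fun y : ℝ => -(y / b + 1 / b ^ 2) * Complex.exp (-b * y))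
      ((y : ℂ) * Complex.exp (-b * y)) y := fun y _ => by
    have h1 : HasDerivAt (fun y : ℝ => (y : ℂ)) 1 y := Complex.ofRealCLM.hasDerivAt
    have h2 := (((h1.div_const b).add_const (1 / b ^ 2)).neg).mul ((h1.const_mul (-b)).cexp)
    refine h2.congr_deriv ?_
    simp only [Pi.neg_apply]
    field_simp
    ring
  rw [integral_Ioi_of_hasDerivAt_of_tendsto' hder (laplace_int hb) hlim]
  simp

lemma norm_int {b : ℂ} (hb : 0 < b.re) :
    ∫ y in Ioi (0 : ℝ), ‖(y : ℂ) * Complex.exp (-b * y)‖ = 1 / b.re ^ 2 := by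
  have h := Real.integral_rpow_mul_exp_neg_mul_Ioi (a := 2) (r := b.re) (by norm_num) hb
  have h2 : ((2 : ℝ) - 1) = 1 := by norm_num
  simp only [h2, Real.rpow_one, Real.Gamma_two, mul_one] at h
  rw [show (1 / b.re ^ 2) = (1 / b.re) ^ (2 : ℝ) by rw [Real.rpow_two]; simp, ← h]
  refine setIntegral_congr_fun measurableSet_Ioi fun y hy => ?_
  have hy : 0 < y := hy
  simp [Complex.norm_exp, abs_of_pos hy]

lemma A_meas : Measurable A := by
  unfold A
  have := Real.measurable_sinh
  fun_prop

/-- Absolute integrability of the double integral, the hypothesis of Fubini's theorem. -/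
lemma prod_int : Integrable
    (Function.uncurry fun y t : ℝ => (y : ℂ) * Complex.exp (-(om ^ 2 * A t) * y))
    ((volume.restrict (Ioi 0)).prod (volume.restrict (Ioi 0))) := by
  have hA := A_meas
  have hm : Measurable
      (Function.uncurry fun y t : ℝ => (y : ℂ) * Complex.exp (-(om ^ 2 * A t) * y)) := by
    unfold Function.uncurry
    fun_prop
  rw [integrable_prod_iff' hm.aestronglyMeasurable]
  have key : ∀ t ∈ Ioi (0 : ℝ), 0 < (om ^ 2 * A t).re := fun t ht => by
    have ht : 0 < t := ht
    rw [omA_re ht]; linarith [(R_bound ht).2]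
  constructor
  · refine (ae_restrict_mem measurableSet_Ioi).mono fun t ht => ?_
    have h := laplace_int (key t ht)
    simp only [Function.uncurry]
    exact h
  · refine Integrable.mono' (integrable_inv_one_add_sq.integrableOn.const_mul 8)
      hm.norm.stronglyMeasurable.integral_prod_left'.aestronglyMeasurable ?_
    refine (ae_restrict_mem measurableSet_Ioi).mono fun t ht => ?_
    have h := norm_int (key t ht)
    have ht : 0 < t := ht
    simp only [Function.uncurry]
    rw [h, omA_re ht, Real.norm_of_nonneg (by positivity)]
    obtain ⟨h1, h2⟩ := R_bound ht
    rw [show 8 * (1 + t ^ 2)⁻¹ = 1 / ((1 + t ^ 2) / 8) by field_simp]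
    gcongr

/-- Euler's beta integral after the substitution `v = e^{-2t}`. -/
lemma beta_eq (p q : ℂ) : Complex.betaIntegral p q = 2 * ∫ t in Ioi (0 : ℝ),
    Complex.exp (-2 * p * t + (q - 1) * Real.log (1 - Real.exp (-2 * t))) := by
  have him : (fun t : ℝ => Real.exp (-2 * t)) '' Ioi 0 = Ioo 0 1 := by
    ext v
    constructor
    · rintro ⟨t, ht, rfl⟩
      have := e_lt ht
      exact ⟨Real.exp_pos _, by linarith⟩
    · rintro ⟨h0, h1⟩
      refine ⟨-Real.log v / 2, ?_, ?_⟩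
      · have := Real.log_neg h0 h1
        simp only [mem_Ioi]; linarith
      · change Real.exp (-2 * (-Real.log v / 2)) = v
        rw [show -2 * (-Real.log v / 2) = Real.log v by ring, Real.exp_log h0]
  have hinj : InjOn (fun t : ℝ => Real.exp (-2 * t)) (Ioi 0) := by
    intro a _ b _ h
    have := Real.exp_injective h
    linarith
  rw [Complex.betaIntegral, intervalIntegral.integral_of_le zero_le_one,
    integral_Ioc_eq_integral_Ioo, ← him,
    integral_image_eq_integral_abs_deriv_smul (f' := fun t => Real.exp (-2 * t) * (-2))
      measurableSet_Ioi (fun t _ => ?_) hinj, ← integral_const_mul]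
  · refine setIntegral_congr_fun measurableSet_Ioi fun t ht => ?_
    have ht : 0 < t := ht
    have h1 := e_lt ht
    rw [abs_mul, abs_of_pos (Real.exp_pos _), Complex.real_smul,
      show (1 : ℂ) - ((Real.exp (-2 * t) : ℝ) : ℂ) = ((1 - Real.exp (-2 * t) : ℝ) : ℂ) by push_cast; rfl,
      Complex.cpow_def_of_ne_zero (by exact_mod_cast (Real.exp_ne_zero _)),
      Complex.cpow_def_of_ne_zero (by exact_mod_cast h1.ne'),
      ← Complex.ofReal_log (Real.exp_pos _).le, ← Complex.ofReal_log h1.le, Real.log_exp]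
    rw [show ((Real.exp (-2 * t) * |(-2)| : ℝ) : ℂ) = 2 * Complex.exp (-2 * t) by
      push_cast; norm_num; ring]
    rw [mul_assoc, ← Complex.exp_add, ← Complex.exp_add]
    congr 2
    push_cast
    ring
  · have : HasDerivAt (fun t : ℝ => -2 * t) (-2) t := by
      simpa using (hasDerivAt_id t).const_mul (-2)
    exact this.exp.hasDerivWithinAt

/-- The left-hand integrand as a beta integral, `-ωy B(-ωy, 1 - ω²y)`, with its parameter
rewritten through `ω² A(t) = -2ωt + ω² ln(1 - e^{-2t})`. -/
lemma gamma_eq {y : ℝ} (hy : 0 < y) :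
    Complex.Gamma (1 - om * y) * Complex.Gamma (1 - y / om) / Complex.Gamma (1 + y)
      = -2 * om * ∫ t in Ioi (0 : ℝ), (y : ℂ) * Complex.exp (-(om ^ 2 * A t) * y) := by
  have hy' : (y : ℂ) ≠ 0 := by exact_mod_cast hy.ne'
  have hinv : (y : ℂ) / om = om ^ 2 * y := by
    rw [div_eq_iff om_ne]; linear_combination -y * om_cube
  have hp : 0 < (-(om * y)).re := by
    rw [Complex.neg_re, Complex.re_mul_ofReal]; simp [om]; linarith
  have hq : 0 < (1 - om ^ 2 * y).re := by
    rw [om_sq, Complex.sub_re, Complex.re_mul_ofReal]; simp [om]; linarith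
  have hG : Complex.Gamma (1 + y) ≠ 0 := by
    apply Complex.Gamma_ne_zero_of_re_pos; simp; linarith
  have hb := Complex.Gamma_mul_Gamma_eq_betaIntegral hp hq
  have hs : -(om * y) + (1 - om ^ 2 * y) = 1 + y := by rw [om_sq]; ring
  rw [hs] at hb
  have h1 : Complex.Gamma (1 - om * y) = -(om * y) * Complex.Gamma (-(om * y)) := by
    rw [← Complex.Gamma_add_one _ (neg_ne_zero.mpr (mul_ne_zero om_ne hy'))]
    congr 1; ring
  rw [hinv, h1, mul_assoc, hb, integral_const_mul, beta_eq]
  have : ∀ I J : ℂ, I = J → -(om * y) * (Complex.Gamma (1 + y) * (2 * I)) / Complex.Gamma (1 + y)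
      = -2 * om * (y * J) := by
    rintro I _ rfl; field_simp
  apply this
  refine setIntegral_congr_fun measurableSet_Ioi fun t ht => ?_
  rw [omA ht]
  congr 1
  ring

/-- `π ∫₀^∞ Γ(1 - ωx) Γ(1 - x/ω) / Γ(1 + x) dx
  = -2π ∫₀^∞ dt / (it√3 + ln(2 sinh t))²`, where `ω = e^{2πi/3}`. -/
theorem stmt_15 :
    (Real.pi : ℂ) * ∫ x in Set.Ioi (0 : ℝ),
        Complex.Gamma (1 - Complex.exp (2 * Real.pi * Complex.I / 3) * x) *
          Complex.Gamma (1 - x / Complex.exp (2 * Real.pi * Complex.I / 3)) /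
          Complex.Gamma (1 + x)
      = -2 * Real.pi * ∫ t in Set.Ioi (0 : ℝ),
          1 / (Complex.I * t * Real.sqrt 3 + Real.log (2 * Real.sinh t)) ^ 2 := by
  rw [om_eq, setIntegral_congr_fun measurableSet_Ioi fun y hy => gamma_eq hy,
    integral_const_mul, integral_integral_swap prod_int,
    setIntegral_congr_fun (g := fun t => om⁻¹ * (1 / A t ^ 2)) measurableSet_Ioi fun t ht => ?_,
    integral_const_mul]
  · have := om_ne
    simp only [A]
    rw [← mul_assoc, ← mul_assoc]
    congr 1
    field_simp
  · have ht : 0 < t := ht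
    have h : 0 < (om ^ 2 * A t).re := by rw [omA_re ht]; linarith [(R_bound ht).2]
    simp only
    rw [laplace h, mul_pow, show (om ^ 2) ^ 2 = om by linear_combination om * om_cube]
    rw [one_div, one_div, mul_inv]
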